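/- Let d ≥ 1, α > 0 and n ≥ 1. There exists a finite constant C = C(d,n,α) such that for every finitely supported function 𝔣 : ℰ_{d,n} → ℝ, Σ_{z∈ℤ^d, z≠0} Σ_{A∈ℰ_{d,n}} s(z) (𝔣(θ_{−z}A) − 𝔣(A))² ≤ C · Σ_{x,y∈ℤ^d, x≠0, y≠0} Σ_{A∈ℰ_{d,n}} s(y−x) (𝔣(A_{x,y}) − 𝔣(A))². -/

import Mathlib

/-- Euclidean norm of a point of `ℤ^d`. -/
noncomputable def znorm (d : ℕ) (z : Fin d → ℤ) : ℝ :=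
  Real.sqrt (∑ i, ((z i : ℝ)) ^ 2)

/-- The normalizing constant `s* = Σ_{x≠0} ‖x‖^{-(d+α)}`. -/
noncomputable def sstar (d : ℕ) (α : ℝ) : ℝ :=
  ∑' x : Fin d → ℤ, if x = 0 then 0 else znorm d x ^ (-((d : ℝ) + α))

/-- The step distribution `s(x) = ‖x‖^{-(d+α)}/s*` on `ℤ^d`, `s(0) = 0`. -/
noncomputable def sfun (d : ℕ) (α : ℝ) (x : Fin d → ℤ) : ℝ :=
  if x = 0 then 0 else znorm d x ^ (-((d : ℝ) + α)) / sstar d α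

/-- `A_{x,y}`: exchange `x` and `y` in the finite set `A`. -/
def swapSet {d : ℕ} (x y : Fin d → ℤ) (A : Finset (Fin d → ℤ)) : Finset (Fin d → ℤ) :=
  if x ∈ A ∧ y ∉ A then insert y (A.erase x)
  else if y ∈ A ∧ x ∉ A then insert x (A.erase y)
  else A

/-- `θ_{−z}A`: the translate `A − z` if `z ∉ A`, and `((A − z) \ {0}) ∪ {−z}` if `z ∈ A`. -/
def shiftSet {d : ℕ} (z : Fin d → ℤ) (A : Finset (Fin d → ℤ)) : Finset (Fin d → ℤ) :=
  if z ∈ A then insert (-z) ((A.image (fun a => a - z)).erase 0)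
  else A.image (fun a => a - z)

/-!
The shift `A ↦ θ_{-z}A` applies to every particle of `A` the permutation `jumpPerm z`, which fixes
`0`, sends `z` to `-z` and any other `a` to `a - z`. As `z` has infinite order, the partial order
generated by `a - z < a` extends to a linear order, for which `jumpPerm z a ≤ a` for all `a`. Moving
the particles of `A` one at a time, in increasing order, never lands on an occupied site, so every
move is an exchange of `a` with `jumpPerm z a`, and the configuration before the move of `a` is an
injective function of `A`. Telescoping and Cauchy–Schwarz bound the energy of the shift by `n` times
the sum over `a` of the energies of these exchanges. They have step `-z`, of rate `s(z)`, except for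
the exchange of `z` with `-z`, whose step `-2z` has rate comparable to `s(z)`; as `z` and `a` vary,
each exchange is used at most twice.
-/

open scoped ENNReal NNReal

section Telescoping

variable {X L : Type*} [LinearOrder L] {key : X → L}

lemma sum_insert_filter_lt_sub {M : Type*} [AddCommGroup M] [DecidableEq X]
    (hkey : Function.Injective key) (g : Finset X → M) (A : Finset X) :
    ∑ a ∈ A, (g (insert a {b ∈ A | key b < key a}) - g {b ∈ A | key b < key a}) =
      g A - g ∅ := by
  induction A using Finset.induction_on_max_value key with
  | empty => simp
  | insert m A hm hmax ih =>
    have hlt : ∀ b ∈ A, key b < key m := fun b hb =>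
      (hmax b hb).lt_of_ne fun h => hm (hkey h ▸ hb)
    have below_max : {b ∈ insert m A | key b < key m} = A := by
      rw [Finset.filter_insert, if_neg (lt_irrefl _), Finset.filter_true_of_mem hlt]
    have below_of_mem : ∀ a ∈ A,
        {b ∈ insert m A | key b < key a} = {b ∈ A | key b < key a} := fun a ha => by
      rw [Finset.filter_insert, if_neg (hlt a ha).not_gt]
    rw [Finset.sum_insert hm, below_max,
      Finset.sum_congr rfl fun a ha => by rw [below_of_mem a ha], ih, sub_add_sub_cancel]

variable {φ : X ↪ X}

/-- The partial application of a key-decreasing embedding `φ`, moving exactly the points of key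
smaller than that of `a`. It is the state of the particles just before `a` is moved. -/
def moveBelow (hφ : ∀ b, key (φ b) ≤ key b) (a : X) : X ↪ X where
  toFun b := if key b < key a then φ b else b
  inj' b c h := by
    dsimp only at h
    split_ifs at h with hb hc hc
    · exact φ.injective h
    · exact absurd (h ▸ (hφ b).trans_lt hb) hc
    · exact absurd (h ▸ (hφ c).trans_lt hc) hb
    · exact h

lemma moveBelow_apply (hφ : ∀ b, key (φ b) ≤ key b) (a b : X) :
    moveBelow hφ a b = if key b < key a then φ b else b :=
  rfl

variable [DecidableEq X]

lemma swap_moveBelow (hkey : Function.Injective key) (hφ : ∀ b, key (φ b) ≤ key b) (a b : X) :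
    Equiv.swap a (φ a) (moveBelow hφ a b) = if b = a ∨ key b < key a then φ b else b := by
  rw [moveBelow_apply]
  rcases eq_or_ne b a with rfl | hba
  · simp
  by_cases hlt : key b < key a
  · have hφa : φ b ≠ a := fun h => (h ▸ (hφ b).trans_lt hlt).false
    rw [if_pos hlt, if_pos (Or.inr hlt), Equiv.swap_apply_of_ne_of_ne hφa (φ.injective.ne hba)]
  · have hφa : b ≠ φ a := fun h => hba (hkey ((h ▸ hφ a).antisymm (not_lt.mp hlt)))
    rw [if_neg hlt, if_neg (not_or.mpr ⟨hba, hlt⟩), Equiv.swap_apply_of_ne_of_ne hba hφa]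

lemma sum_swap_moveBelow_sub {M : Type*} [AddCommGroup M] (hkey : Function.Injective key)
    (hφ : ∀ b, key (φ b) ≤ key b) (f : Finset X → M) (A : Finset X) :
    ∑ a ∈ A, (f ((A.map (moveBelow hφ a)).map (Equiv.swap a (φ a)).toEmbedding) -
      f (A.map (moveBelow hφ a))) = f (A.map φ) - f A := by
  have htel := sum_insert_filter_lt_sub hkey
    (fun S => f (A.image fun b => if b ∈ S then φ b else b)) A
  have hfull : A.image (fun b => if b ∈ A then φ b else b) = A.map φ := by
    rw [Finset.map_eq_image]
    exact Finset.image_congr fun _ hb => if_pos hb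
  simp only [hfull, Finset.notMem_empty, if_false, Finset.image_id'] at htel
  rw [← htel]
  refine Finset.sum_congr rfl fun a _ => ?_
  congr 2
  · rw [Finset.map_map, Finset.map_eq_image]
    refine Finset.image_congr fun b hb => ?_
    simpa [Finset.mem_coe.mp hb] using swap_moveBelow hkey hφ a b
  · rw [Finset.map_eq_image]
    refine Finset.image_congr fun b hb => ?_
    simp [Finset.mem_coe.mp hb, moveBelow_apply]

lemma ofReal_sq_map_sub_le (hkey : Function.Injective key) (hφ : ∀ b, key (φ b) ≤ key b)
    (f : Finset X → ℝ) (A : Finset X) :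
    ENNReal.ofReal ((f (A.map φ) - f A) ^ 2) ≤ A.card * ∑ a ∈ A,
      ENNReal.ofReal ((f ((A.map (moveBelow hφ a)).map (Equiv.swap a (φ a)).toEmbedding) -
        f (A.map (moveBelow hφ a))) ^ 2) := by
  rw [← sum_swap_moveBelow_sub hkey hφ f A, ← ENNReal.ofReal_sum_of_nonneg fun _ _ => sq_nonneg _,
    ← ENNReal.ofReal_natCast, ← ENNReal.ofReal_mul (Nat.cast_nonneg _)]
  exact ENNReal.ofReal_le_ofReal sq_sum_le_card_mul_sum_sq

end Telescoping

section Configurations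

variable {X : Type*} [Zero X] {n : ℕ} {f : Finset X → ℝ}

/-- The set `ℰ_n` of `n`-element configurations of particles avoiding the origin. -/
abbrev Config (X : Type*) [Zero X] (n : ℕ) : Type _ :=
  {A : Finset X // A.card = n ∧ (0 : X) ∉ A}

/-- The energy `Σ_{A ∈ ℰ_n} (f(φ A) - f(A))²` of `f` along a map `φ` of sites. It takes values in
`[0, ∞]`, so that sums of energies can be rearranged without summability conditions. -/
noncomputable def mapEnergy (n : ℕ) (f : Finset X → ℝ) (φ : X ↪ X) : ℝ≥0∞ :=
  ∑' A : Config X n, ENNReal.ofReal ((f (A.1.map φ) - f A.1) ^ 2)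

lemma toReal_mapEnergy (n : ℕ) (f : Finset X → ℝ) (φ : X ↪ X) :
    (mapEnergy n f φ).toReal = ∑' A : Config X n, (f (A.1.map φ) - f A.1) ^ 2 := by
  rw [mapEnergy, ENNReal.tsum_toReal_eq fun _ => ENNReal.ofReal_ne_top]
  simp only [ENNReal.toReal_ofReal (sq_nonneg _)]

lemma mapEnergy_refl (n : ℕ) (f : Finset X → ℝ) :
    mapEnergy n f (Equiv.refl X).toEmbedding = 0 := by
  simp [mapEnergy]

lemma tsum_config_map_le {φ : X ↪ X} (hφ : φ 0 = 0) (h : Finset X → ℝ≥0∞) :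
    ∑' A : Config X n, h (A.1.map φ) ≤ ∑' A : Config X n, h A.1 := by
  let φ' : Config X n → Config X n := fun A => ⟨A.1.map φ, (Finset.card_map φ).trans A.2.1,
    fun h₀ => A.2.2 ((Finset.mem_map' φ).mp (hφ.symm ▸ h₀))⟩
  have hφ' : Function.Injective φ' := fun A B hAB =>
    Subtype.ext (Finset.map_injective φ (congrArg Subtype.val hAB))
  exact ENNReal.tsum_comp_le_tsum_of_injective hφ' fun A => h A.1

variable [DecidableEq X]

lemma mapEnergy_le_sum_swap {L : Type*} [LinearOrder L] {key : X → L}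
    (hkey : Function.Injective key) {φ : X ↪ X} (hφ : ∀ b, key (φ b) ≤ key b) (hφ₀ : φ 0 = 0) :
    mapEnergy n f φ ≤ n * ∑' a, mapEnergy n f (Equiv.swap a (φ a)).toEmbedding := by
  have hmove₀ : ∀ a, moveBelow hφ a 0 = 0 := fun a => by rw [moveBelow_apply, hφ₀, ite_self]
  let D (a : X) (B : Finset X) : ℝ≥0∞ :=
    ENNReal.ofReal ((f (B.map (Equiv.swap a (φ a)).toEmbedding) - f B) ^ 2)
  calc mapEnergy n f φ
      ≤ ∑' A : Config X n, n * ∑' a, D a (A.1.map (moveBelow hφ a)) := by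
        refine ENNReal.tsum_le_tsum fun A => (ofReal_sq_map_sub_le hkey hφ f A.1).trans ?_
        rw [A.2.1]
        gcongr
        exact ENNReal.sum_le_tsum (f := fun a => D a (A.1.map (moveBelow hφ a))) A.1
    _ = n * ∑' a, ∑' A : Config X n, D a (A.1.map (moveBelow hφ a)) := by
        rw [ENNReal.tsum_mul_left, ENNReal.tsum_comm]
    _ ≤ n * ∑' a, mapEnergy n f (Equiv.swap a (φ a)).toEmbedding := by
        gcongr with a
        exact tsum_config_map_le (hmove₀ a) (D a)

/-- The part of `Σ_{A ∈ ℰ_n} f(A)²` carried by the configurations occupying the site `x`. -/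
noncomputable def occupiedNormSq (n : ℕ) (f : Finset X → ℝ) (x : X) : ℝ≥0∞ :=
  ∑' A : Config X n, if x ∈ A.1 then ENNReal.ofReal (f A.1 ^ 2) else 0

lemma tsum_occupiedNormSq (n : ℕ) (f : Finset X → ℝ) :
    ∑' x, occupiedNormSq n f x = n * ∑' A : Config X n, ENNReal.ofReal (f A.1 ^ 2) := by
  simp only [occupiedNormSq]
  rw [ENNReal.tsum_comm, ← ENNReal.tsum_mul_left]
  refine tsum_congr fun A => ?_
  rw [tsum_eq_sum (s := A.1) fun x hx => if_neg hx, Finset.sum_ite_mem, Finset.inter_self,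
    Finset.sum_const, nsmul_eq_mul, A.2.1]

lemma ofReal_sub_sq_le (a b : ℝ) :
    ENNReal.ofReal ((a - b) ^ 2) ≤ 2 * (ENNReal.ofReal (a ^ 2) + ENNReal.ofReal (b ^ 2)) := by
  rw [← ENNReal.ofReal_add (sq_nonneg a) (sq_nonneg b), ← ENNReal.ofReal_ofNat,
    ← ENNReal.ofReal_mul zero_le_two]
  refine ENNReal.ofReal_le_ofReal ?_
  simpa [sub_eq_add_neg] using add_sq_le (a := a) (b := -b)

lemma mapEnergy_swap_le {x y : X} (hx : x ≠ 0) (hy : y ≠ 0) :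
    mapEnergy n f (Equiv.swap x y).toEmbedding ≤
      4 * (occupiedNormSq n f x + occupiedNormSq n f y) := by
  let σ := (Equiv.swap x y).toEmbedding
  let w (A : Finset X) : ℝ≥0∞ := ENNReal.ofReal (f A ^ 2)
  let W (A : Finset X) : ℝ≥0∞ := (if x ∈ A then w A else 0) + if y ∈ A then w A else 0
  have hσ₀ : σ 0 = 0 := Equiv.swap_apply_of_ne_of_ne hx.symm hy.symm
  have hpoint : ∀ A : Finset X,
      ENNReal.ofReal ((f (A.map σ) - f A) ^ 2) ≤ 2 * (W (A.map σ) + W A) := fun A => by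
    have hxσ : x ∈ A.map σ ↔ y ∈ A := by simp [σ, Finset.mem_map_equiv]
    have hyσ : y ∈ A.map σ ↔ x ∈ A := by simp [σ, Finset.mem_map_equiv]
    by_cases hA : x ∈ A ∨ y ∈ A
    · refine (ofReal_sub_sq_le _ _).trans ?_
      gcongr <;> rcases hA with h | h <;> simp [W, w, hxσ, hyσ, h]
    · have hfix : A.map σ = A := by
        rw [Finset.map_eq_image]
        refine (Finset.image_congr fun a ha => ?_).trans Finset.image_id
        exact Equiv.swap_apply_of_ne_of_ne (fun h => hA (Or.inl (h ▸ ha)))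
          fun h => hA (Or.inr (h ▸ ha))
      simp [hfix]
  calc mapEnergy n f σ
      ≤ ∑' A : Config X n, 2 * (W (A.1.map σ) + W A.1) :=
        ENNReal.tsum_le_tsum fun A => hpoint A.1
    _ ≤ 2 * (∑' A : Config X n, W A.1 + ∑' A : Config X n, W A.1) := by
        rw [ENNReal.tsum_mul_left, ENNReal.tsum_add]
        exact mul_le_mul_right (add_le_add_left (tsum_config_map_le hσ₀ W) _) _
    _ = 4 * (occupiedNormSq n f x + occupiedNormSq n f y) := by
        rw [← two_mul, ← mul_assoc, ENNReal.tsum_add]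
        norm_num [occupiedNormSq, w]

end Configurations

section JumpPerm

variable {G : Type*} [AddGroup G] [DecidableEq G]

/-- The permutation of sites induced, in the frame of a tagged particle at the origin, by the jump
of that particle to `z`: sites are translated by `-z`, except that the site `z`, which the tagged
particle exchanges with its own, becomes `-z`. Fixing the origin makes it a permutation. -/
def jumpPerm (z : G) : Equiv.Perm G :=
  (Equiv.subRight z).trans (Equiv.swap 0 (-z))

lemma jumpPerm_apply_zero (z : G) : jumpPerm z 0 = 0 := by
  simp [jumpPerm]

lemma jumpPerm_apply_self (z : G) : jumpPerm z z = -z := by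
  simp [jumpPerm]

lemma jumpPerm_apply_of_ne {z a : G} (ha : a ≠ 0) (haz : a ≠ z) : jumpPerm z a = a - z := by
  have hne : a - z ≠ -z := by rwa [sub_eq_add_neg, Ne, add_eq_right]
  simp [jumpPerm, Equiv.swap_apply_of_ne_of_ne (sub_ne_zero.mpr haz) hne]

lemma jumpPerm_zero : jumpPerm (0 : G) = Equiv.refl G := by
  ext a
  simp [jumpPerm]

end JumpPerm

universe u

lemma exists_injective_key_sub_le {G : Type u} [AddGroup G] [IsAddTorsionFree G] {z : G}
    (hz : z ≠ 0) :
    ∃ (L : Type u) (_ : LinearOrder L) (key : G → L),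
      Function.Injective key ∧ ∀ a, key (a - z) ≤ key a := by
  let _ : PartialOrder G :=
    { le := fun a b => ∃ k : ℕ, a + k • z = b
      le_refl := fun a => ⟨0, by simp⟩
      le_trans := by
        rintro a _ _ ⟨k, rfl⟩ ⟨l, rfl⟩
        exact ⟨k + l, by rw [add_nsmul, add_assoc]⟩
      le_antisymm := by
        rintro a _ ⟨k, rfl⟩ ⟨l, h⟩
        have hkl : k + l = 0 := by
          rwa [add_assoc, ← add_nsmul, add_eq_left, nsmul_eq_zero_iff_left hz] at h
        simp [(Nat.add_eq_zero_iff.mp hkl).1] }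
  exact ⟨LinearExtension G, inferInstance, toLinearExtension, Function.injective_id,
    fun a => toLinearExtension.monotone ⟨1, by simp⟩⟩

lemma mapEnergy_jumpPerm_le {G : Type*} [AddGroup G] [DecidableEq G] [IsAddTorsionFree G]
    (n : ℕ) (f : Finset G → ℝ) (z : G) :
    mapEnergy n f (jumpPerm z).toEmbedding ≤
      n * ∑' a, mapEnergy n f (Equiv.swap a (jumpPerm z a)).toEmbedding := by
  rcases eq_or_ne z 0 with rfl | hz
  · rw [jumpPerm_zero, mapEnergy_refl]
    exact zero_le
  obtain ⟨L, _, key, hkey, hsub⟩ := exists_injective_key_sub_le hz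
  have hneg : key (-z) ≤ key z := by
    calc key (-z) = key (0 - z) := by rw [zero_sub]
      _ ≤ key 0 := hsub 0
      _ = key (z - z) := by rw [sub_self]
      _ ≤ key z := hsub z
  refine mapEnergy_le_sum_swap hkey (fun a => ?_) (jumpPerm_apply_zero z)
  rw [Equiv.coe_toEmbedding]
  rcases eq_or_ne a 0 with rfl | ha
  · rw [jumpPerm_apply_zero]
  rcases eq_or_ne a z with rfl | haz
  · rwa [jumpPerm_apply_self]
  · rw [jumpPerm_apply_of_ne ha haz]
    exact hsub a

section DirichletForms

variable {G : Type*} [AddCommGroup G] [DecidableEq G] {n : ℕ} {f : Finset G → ℝ}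

/-- The Dirichlet form of the jumps of the tagged particle, with jump rates `s`. -/
noncomputable def jumpForm (s : G → ℝ≥0∞) (n : ℕ) (f : Finset G → ℝ) : ℝ≥0∞ :=
  ∑' z, s z * mapEnergy n f (jumpPerm z).toEmbedding

/-- The contribution to the exchange Dirichlet form of the exchanges of `x` with `y`. -/
noncomputable def exchangeTerm (s : G → ℝ≥0∞) (n : ℕ) (f : Finset G → ℝ) (x y : G) : ℝ≥0∞ :=
  if x ≠ 0 ∧ y ≠ 0 then s (y - x) * mapEnergy n f (Equiv.swap x y).toEmbedding else 0

/-- The Dirichlet form of the exchanges of sites other than the origin, with rates `s`. -/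
noncomputable def exchangeForm (s : G → ℝ≥0∞) (n : ℕ) (f : Finset G → ℝ) : ℝ≥0∞ :=
  ∑' x, ∑' y, exchangeTerm s n f x y

lemma mul_mapEnergy_swap_jumpPerm_le {s : G → ℝ≥0∞} (hs : ∀ z, s (-z) = s z) {K : ℝ≥0∞}
    (hK : ∀ z, s z ≤ K * s (2 • z)) (z a : G) :
    s z * mapEnergy n f (Equiv.swap a (jumpPerm z a)).toEmbedding ≤
      exchangeTerm s n f a (a - z) + if a = z then K * exchangeTerm s n f z (-z) else 0 := by
  rcases eq_or_ne a 0 with rfl | ha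
  · rw [jumpPerm_apply_zero, Equiv.swap_self, mapEnergy_refl, mul_zero]
    exact zero_le
  rcases eq_or_ne a z with rfl | haz
  · have hstep : s a ≤ K * s (-a - a) := by
      rw [← hs (-a - a), neg_sub, sub_neg_eq_add, ← two_nsmul]
      exact hK a
    rw [jumpPerm_apply_self, if_pos rfl]
    refine le_add_of_le_right ?_
    rw [exchangeTerm, if_pos ⟨ha, neg_ne_zero.mpr ha⟩, ← mul_assoc]
    exact mul_le_mul_left hstep _
  · rw [jumpPerm_apply_of_ne ha haz, exchangeTerm, if_pos ⟨ha, sub_ne_zero.mpr haz⟩,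
      sub_sub_cancel_left, hs]
    exact le_self_add

theorem jumpForm_le_exchangeForm [IsAddTorsionFree G] {s : G → ℝ≥0∞} (hs : ∀ z, s (-z) = s z)
    {K : ℝ≥0∞} (hK : ∀ z, s z ≤ K * s (2 • z)) (n : ℕ) (f : Finset G → ℝ) :
    jumpForm s n f ≤ n * (1 + K) * exchangeForm s n f := by
  calc jumpForm s n f
      ≤ ∑' z, s z * (n * ∑' a, mapEnergy n f (Equiv.swap a (jumpPerm z a)).toEmbedding) :=
        ENNReal.tsum_le_tsum fun z => mul_le_mul_right (mapEnergy_jumpPerm_le n f z) _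
    _ = n * ∑' z, ∑' a, s z * mapEnergy n f (Equiv.swap a (jumpPerm z a)).toEmbedding := by
        simp only [mul_left_comm _ (n : ℝ≥0∞), ENNReal.tsum_mul_left]
    _ ≤ n * ∑' z, ∑' a, (exchangeTerm s n f a (a - z) +
          if a = z then K * exchangeTerm s n f z (-z) else 0) := by
        gcongr with z a
        exact mul_mapEnergy_swap_jumpPerm_le hs hK z a
    _ = n * (∑' a, ∑' z, exchangeTerm s n f a (a - z) +
          K * ∑' z, exchangeTerm s n f z (-z)) := by
        simp only [ENNReal.tsum_add, tsum_ite_eq, ENNReal.tsum_mul_left]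
        rw [ENNReal.tsum_comm]
    _ ≤ n * (exchangeForm s n f + K * exchangeForm s n f) := by
        gcongr
        · exact (tsum_congr fun a => (Equiv.subLeft a).tsum_eq (exchangeTerm s n f a)).le
        · exact ENNReal.tsum_le_tsum fun z => ENNReal.le_tsum (-z)
    _ = n * (1 + K) * exchangeForm s n f := by ring

lemma exchangeForm_le (s : G → ℝ≥0∞) (n : ℕ) (f : Finset G → ℝ) :
    exchangeForm s n f ≤
      8 * n * (∑' z, s z) * ∑' A : Config G n, ENNReal.ofReal (f A.1 ^ 2) := by
  have hterm : ∀ x y, exchangeTerm s n f x y ≤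
      4 * (s (y - x) * occupiedNormSq n f x + s (y - x) * occupiedNormSq n f y) := fun x y => by
    unfold exchangeTerm
    split_ifs with h
    · rw [← mul_add, mul_left_comm]
      gcongr
      exact mapEnergy_swap_le h.1 h.2
    · exact zero_le
  have hsum_left : ∀ x, ∑' y, s (y - x) = ∑' z, s z := fun x => (Equiv.subRight x).tsum_eq s
  have hsum_right : ∀ y, ∑' x, s (y - x) = ∑' z, s z := fun y => (Equiv.subLeft y).tsum_eq s
  calc exchangeForm s n f
      ≤ ∑' x, ∑' y,
          4 * (s (y - x) * occupiedNormSq n f x + s (y - x) * occupiedNormSq n f y) :=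
        ENNReal.tsum_le_tsum fun x => ENNReal.tsum_le_tsum fun y => hterm x y
    _ = 4 * (∑' x, ∑' y, s (y - x) * occupiedNormSq n f x +
          ∑' y, ∑' x, s (y - x) * occupiedNormSq n f y) := by
        simp only [ENNReal.tsum_mul_left, ENNReal.tsum_add]
        rw [ENNReal.tsum_comm (f := fun x y => s (y - x) * occupiedNormSq n f y)]
    _ = 8 * ((∑' z, s z) * ∑' x, occupiedNormSq n f x) := by
        simp only [ENNReal.tsum_mul_right, hsum_left, hsum_right, ENNReal.tsum_mul_left]
        ring
    _ = 8 * n * (∑' z, s z) * ∑' A : Config G n, ENNReal.ofReal (f A.1 ^ 2) := by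
        rw [tsum_occupiedNormSq]
        ring

variable {s : G → ℝ}

lemma toReal_jumpForm (hs : ∀ z, 0 ≤ s z)
    (hfin : jumpForm (fun z => ENNReal.ofReal (s z)) n f ≠ ∞) :
    (jumpForm (fun z => ENNReal.ofReal (s z)) n f).toReal =
      ∑' z, ∑' A : Config G n,
        s z * (f (A.1.map (jumpPerm z).toEmbedding) - f A.1) ^ 2 := by
  rw [jumpForm, ENNReal.tsum_toReal_eq (ENNReal.ne_top_of_tsum_ne_top hfin)]
  simp only [ENNReal.toReal_mul, ENNReal.toReal_ofReal (hs _), toReal_mapEnergy, tsum_mul_left]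

lemma toReal_exchangeForm (hs : ∀ z, 0 ≤ s z)
    (hfin : exchangeForm (fun z => ENNReal.ofReal (s z)) n f ≠ ∞) :
    (exchangeForm (fun z => ENNReal.ofReal (s z)) n f).toReal =
      ∑' x, ∑' y, ∑' A : Config G n,
        if x ≠ 0 ∧ y ≠ 0 then
          s (y - x) * (f (A.1.map (Equiv.swap x y).toEmbedding) - f A.1) ^ 2 else 0 := by
  have hfin_inner := ENNReal.ne_top_of_tsum_ne_top hfin
  rw [exchangeForm, ENNReal.tsum_toReal_eq hfin_inner]
  refine tsum_congr fun x => ?_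
  rw [ENNReal.tsum_toReal_eq (ENNReal.ne_top_of_tsum_ne_top (hfin_inner x))]
  refine tsum_congr fun y => ?_
  unfold exchangeTerm
  split_ifs with h
  · rw [ENNReal.toReal_mul, ENNReal.toReal_ofReal (hs _), toReal_mapEnergy, tsum_mul_left]
  · rw [ENNReal.toReal_zero, tsum_zero]

theorem statement17_general [IsAddTorsionFree G] (hs₀ : ∀ z, 0 ≤ s z) (hs : ∀ z, s (-z) = s z)
    (hsum : Summable s) {K : ℝ≥0} (hK : ∀ z, s z ≤ K * s (2 • z))
    (hf : Summable fun A : Config G n => f A.1 ^ 2) :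
    ∑' z, ∑' A : Config G n, s z * (f (A.1.map (jumpPerm z).toEmbedding) - f A.1) ^ 2 ≤
      n * (1 + K) * ∑' x, ∑' y, ∑' A : Config G n,
        if x ≠ 0 ∧ y ≠ 0 then
          s (y - x) * (f (A.1.map (Equiv.swap x y).toEmbedding) - f A.1) ^ 2 else 0 := by
  let s' : G → ℝ≥0∞ := fun z => ENNReal.ofReal (s z)
  have hs' : ∀ z, s' (-z) = s' z := fun z => congrArg ENNReal.ofReal (hs z)
  have hK' : ∀ z, s' z ≤ K * s' (2 • z) := fun z => by
    rw [← ENNReal.ofReal_coe_nnreal, ← ENNReal.ofReal_mul K.coe_nonneg]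
    exact ENNReal.ofReal_le_ofReal (hK z)
  have hconst : (n * (1 + K) : ℝ≥0∞) ≠ ∞ := by finiteness
  have hexch : exchangeForm s' n f ≠ ∞ := by
    refine ne_top_of_le_ne_top ?_ (exchangeForm_le s' n f)
    have := hsum.tsum_ofReal_ne_top
    have := hf.tsum_ofReal_ne_top
    finiteness
  have hle := jumpForm_le_exchangeForm hs' hK' n f
  have hrhs := ENNReal.mul_ne_top hconst hexch
  rw [← toReal_jumpForm hs₀ (ne_top_of_le_ne_top hrhs hle), ← toReal_exchangeForm hs₀ hexch]
  simpa [ENNReal.toReal_add] using ENNReal.toReal_mono hrhs hle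

end DirichletForms

section IntegerLattice

variable {d : ℕ}

lemma swapSet_eq_map (x y : Fin d → ℤ) (A : Finset (Fin d → ℤ)) :
    swapSet x y A = A.map (Equiv.swap x y).toEmbedding := by
  ext b
  rw [Finset.mem_map_equiv, Equiv.symm_swap, Equiv.swap_apply_def]
  unfold swapSet
  grind

lemma shiftSet_eq_map {n : ℕ} (z : Fin d → ℤ) (A : Config (Fin d → ℤ) n) :
    shiftSet z A.1 = A.1.map (jumpPerm z).toEmbedding := by
  have htranslate : (A.1.erase z).image (· - z) = (A.1.erase z).map (jumpPerm z).toEmbedding := by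
    rw [Finset.map_eq_image]
    refine Finset.image_congr fun a ha => ?_
    obtain ⟨haz, haA⟩ := Finset.mem_erase.mp ha
    exact (jumpPerm_apply_of_ne (ne_of_mem_of_not_mem haA A.2.2) haz).symm
  unfold shiftSet
  split_ifs with hz
  · conv_rhs => rw [← Finset.insert_erase hz, Finset.map_insert, ← htranslate]
    rw [Finset.image_erase sub_left_injective, sub_self, Equiv.coe_toEmbedding,
      jumpPerm_apply_self]
  · rwa [Finset.erase_eq_of_notMem hz] at htranslate

lemma znorm_zsmul (k : ℤ) (z : Fin d → ℤ) : znorm d (k • z) = |(k : ℝ)| * znorm d z := by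
  unfold znorm
  rw [← Real.sqrt_sq_eq_abs, ← Real.sqrt_mul (sq_nonneg _), Finset.mul_sum]
  simp only [Pi.smul_apply, smul_eq_mul, Int.cast_mul, mul_pow]

lemma znorm_nonneg (z : Fin d → ℤ) : 0 ≤ znorm d z :=
  Real.sqrt_nonneg _

lemma sstar_nonneg (d : ℕ) (α : ℝ) : 0 ≤ sstar d α :=
  tsum_nonneg fun x => by
    split_ifs
    exacts [le_rfl, Real.rpow_nonneg (znorm_nonneg x) _]

lemma sfun_nonneg (d : ℕ) (α : ℝ) (x : Fin d → ℤ) : 0 ≤ sfun d α x := by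
  unfold sfun
  split_ifs
  exacts [le_rfl, div_nonneg (Real.rpow_nonneg (znorm_nonneg x) _) (sstar_nonneg d α)]

lemma sfun_zsmul (α : ℝ) {k : ℤ} (hk : k ≠ 0) (z : Fin d → ℤ) :
    sfun d α (k • z) = |(k : ℝ)| ^ (-((d : ℝ) + α)) * sfun d α z := by
  rcases eq_or_ne z 0 with rfl | hz
  · simp [sfun]
  · rw [sfun, sfun, if_neg (smul_ne_zero hk hz), if_neg hz, znorm_zsmul,
      Real.mul_rpow (abs_nonneg _) (znorm_nonneg z), mul_div_assoc]

lemma sfun_neg (α : ℝ) (z : Fin d → ℤ) : sfun d α (-z) = sfun d α z := by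
  simpa using sfun_zsmul α (show (-1 : ℤ) ≠ 0 by decide) z

lemma sfun_eq_two_rpow_mul (α : ℝ) (z : Fin d → ℤ) :
    sfun d α z = 2 ^ ((d : ℝ) + α) * sfun d α (2 • z) := by
  rw [← ofNat_zsmul, sfun_zsmul α two_ne_zero, Int.cast_ofNat, Nat.abs_ofNat, ← mul_assoc,
    ← Real.rpow_add two_pos, add_neg_cancel, Real.rpow_zero, one_mul]

lemma summable_znorm_rpow {r : ℝ} (hr : r < -d) :
    Summable fun z : Fin d → ℤ => znorm d z ^ r := by
  let e := (EuclideanSpace.basisFun (Fin d) ℝ).toBasis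
  let Λ := Submodule.span ℤ (Set.range e)
  have hrank : Module.finrank ℤ Λ ≤ d :=
    (finrank_range_le_card e).trans_eq (Fintype.card_fin d)
  have hmem : ∀ z : Fin d → ℤ, WithLp.toLp 2 (fun i => (z i : ℝ)) ∈ Λ := fun z => by
    have hz : WithLp.toLp 2 (fun i => (z i : ℝ)) = ∑ i, z i • e i := by
      ext i
      simp [e, Pi.single_apply]
    rw [hz]
    exact Submodule.sum_mem _ fun i _ =>
      Submodule.smul_mem _ _ (Submodule.subset_span (Set.mem_range_self i))
  let ι : (Fin d → ℤ) → Λ := fun z => ⟨WithLp.toLp 2 fun i => (z i : ℝ), hmem z⟩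
  have hι : Function.Injective ι := fun y z hyz => funext fun i => by
    have := congrArg (fun v : Λ => v.1 i) hyz
    simpa [ι] using this
  have hnorm : ∀ z, ‖ι z‖ = znorm d z := fun z => by
    simp [ι, znorm, EuclideanSpace.norm_eq]
  have hsum := ZLattice.summable_norm_rpow Λ r (hr.trans_le (neg_le_neg (Nat.cast_le.mpr hrank)))
  simpa only [Function.comp_def, hnorm] using hsum.comp_injective hι

lemma summable_sfun (d : ℕ) {α : ℝ} (hα : 0 < α) : Summable (sfun d α) := by
  have hr : -((d : ℝ) + α) < -d := neg_lt_neg (lt_add_of_pos_right _ hα)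
  refine ((summable_znorm_rpow hr).div_const (sstar d α)).of_nonneg_of_le (sfun_nonneg d α)
    fun x => ?_
  unfold sfun
  split_ifs
  exacts [div_nonneg (Real.rpow_nonneg (znorm_nonneg x) _) (sstar_nonneg d α), le_rfl]

end IntegerLattice

/-- comparison of the "tagged-jump" Dirichlet form with the "exchange"
Dirichlet form on the level of coefficient functions of degree `n`: there is
`C = C(d,n,α)` with
`Σ_{z≠0} Σ_{A∈ℰ_{d,n}} s(z)(𝔣(θ_{−z}A) − 𝔣(A))²
  ≤ C Σ_{x,y≠0} Σ_{A∈ℰ_{d,n}} s(y−x)(𝔣(A_{x,y}) − 𝔣(A))²`. -/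
theorem statement17 (d n : ℕ) (hd : 1 ≤ d) (hn : 1 ≤ n) (α : ℝ) (hα : 0 < α) :
    ∃ C : ℝ, ∀ f : Finset (Fin d → ℤ) → ℝ, (Function.support f).Finite →
      (∑' z : Fin d → ℤ,
        ∑' A : {A : Finset (Fin d → ℤ) // A.card = n ∧ (0 : Fin d → ℤ) ∉ A},
          sfun d α z * (f (shiftSet z A.1) - f A.1) ^ 2)
      ≤ C * ∑' x : Fin d → ℤ, ∑' y : Fin d → ℤ,
          ∑' A : {A : Finset (Fin d → ℤ) // A.card = n ∧ (0 : Fin d → ℤ) ∉ A},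
            (if x ≠ 0 ∧ y ≠ 0 then
              sfun d α (y - x) * (f (swapSet x y A.1) - f A.1) ^ 2 else 0) := by
  refine ⟨n * (1 + 2 ^ ((d : ℝ) + α)), fun f hf => ?_⟩
  have hfsq : Summable fun A : Config (Fin d → ℤ) n => f A.1 ^ 2 :=
    summable_of_hasFiniteSupport <|
      (hf.preimage Subtype.val_injective.injOn).subset fun _ hA =>
        (pow_ne_zero_iff two_ne_zero).mp hA
  have h := statement17_general (K := 2 ^ ((d : ℝ) + α)) (sfun_nonneg d α) (sfun_neg α)
    (summable_sfun d hα) (fun z => (sfun_eq_two_rpow_mul α z).le) hfsq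
  simpa [shiftSet_eq_map, swapSet_eq_map] using h
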